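/- Let α ∈ ℝ, v > 0, and μ_{G1}, μ_{G2}, μ_{P1}, μ_{P2} ∈ ℝ. Define ρ₁ = α·N(·; μ_{G1}, v) + (1−α)·N(·; μ_{P1}, v), ρ₂ = α·N(·; μ_{G1}, v) + (1−α)·N(·; μ_{P2}, v), ρ₃ = α·N(·; μ_{G2}, v) + (1−α)·N(·; μ_{P1}, v), and ρ₄ = α·N(·; μ_{G2}, v) + (1−α)·N(·; μ_{P2}, v). Then ∫ (ρ₁ − ρ₄)² = ∫ (ρ₁ − ρ₂)² + ∫ (ρ₁ − ρ₃)² + 2α(1−α)·(N(μ_{G1}; μ_{P1}, 2v) − N(μ_{G1}; μ_{P2}, 2v) + N(μ_{G2}; μ_{P2}, 2v) − N(μ_{G2}; μ_{P1}, 2v)). -/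

import Mathlib

open MeasureTheory Real

/-- The Gaussian probability density on `ℝ` with mean `μ` and variance `v`:
`N(x; μ, v) = (2πv)^{-1/2} exp(-(x-μ)²/(2v))`. -/
noncomputable def gaussPdf (μ v x : ℝ) : ℝ :=
    (Real.sqrt (2 * Real.pi * v))⁻¹ * Real.exp (-(x - μ) ^ 2 / (2 * v))

/-!
Write `Gᵢ` and `Pᵢ` for the component densities. Pointwise, `ρ₁ - ρ₄ = (ρ₁ - ρ₂) + (ρ₁ - ρ₃)`,
where `ρ₁ - ρ₂ = (1 - α) (P₁ - P₂)` and `ρ₁ - ρ₃ = α (G₁ - G₂)`; the discrepancy between the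
squared `L²` distances is therefore twice the `L²` inner product of the two summands. Expanding it
bilinearly leaves inner products of Gaussian densities, which completing the square evaluates: the
product of two Gaussian densities is a Gaussian density rescaled by a Gaussian in the difference of
the means, with the variances added.
-/

section SquareIntegrable

variable {X : Type*} [MeasurableSpace X] {ν : Measure X}

theorem integral_add_sq_of_memLp_two {f g : X → ℝ} (hf : MemLp f 2 ν) (hg : MemLp g 2 ν) :
    ∫ x, (f x + g x) ^ 2 ∂ν =
      ∫ x, f x ^ 2 ∂ν + ∫ x, g x ^ 2 ∂ν + 2 * ∫ x, f x * g x ∂ν := by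
  have hfg : Integrable (fun x ↦ 2 * (f x * g x)) ν := (hf.integrable_mul hg).const_mul 2
  calc
    _ = ∫ x, (f x ^ 2 + g x ^ 2 + 2 * (f x * g x)) ∂ν := by
      congr with x
      ring
    _ = _ := by
      rw [integral_add (hf.integrable_sq.fun_add hg.integrable_sq) hfg,
        integral_add hf.integrable_sq hg.integrable_sq, integral_const_mul]

theorem integral_sub_mul_sub {f₁ f₂ g₁ g₂ : X → ℝ}
    (h₁₁ : Integrable (fun x ↦ f₁ x * g₁ x) ν) (h₁₂ : Integrable (fun x ↦ f₁ x * g₂ x) ν)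
    (h₂₁ : Integrable (fun x ↦ f₂ x * g₁ x) ν) (h₂₂ : Integrable (fun x ↦ f₂ x * g₂ x) ν) :
    ∫ x, (f₁ x - f₂ x) * (g₁ x - g₂ x) ∂ν =
      ∫ x, f₁ x * g₁ x ∂ν - ∫ x, f₁ x * g₂ x ∂ν +
        ∫ x, f₂ x * g₂ x ∂ν - ∫ x, f₂ x * g₁ x ∂ν := by
  calc
    _ = ∫ x, (f₁ x * g₁ x - f₁ x * g₂ x + f₂ x * g₂ x - f₂ x * g₁ x) ∂ν := by
      congr with x
      ring
    _ = _ := by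
      rw [integral_sub ((h₁₁.sub' h₁₂).fun_add h₂₂) h₂₁, integral_add (h₁₁.sub' h₁₂) h₂₂,
        integral_sub h₁₁ h₁₂]

theorem integral_sq_linearCombination_sub {f₁ f₂ g₁ g₂ : X → ℝ} (α β : ℝ) (hf₁ : MemLp f₁ 2 ν)
    (hf₂ : MemLp f₂ 2 ν) (hg₁ : MemLp g₁ 2 ν) (hg₂ : MemLp g₂ 2 ν) :
    ∫ x, ((α * f₁ x + β * g₁ x) - (α * f₂ x + β * g₂ x)) ^ 2 ∂ν =
      ∫ x, ((α * f₁ x + β * g₁ x) - (α * f₁ x + β * g₂ x)) ^ 2 ∂ν +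
        ∫ x, ((α * f₁ x + β * g₁ x) - (α * f₂ x + β * g₁ x)) ^ 2 ∂ν +
        2 * α * β * ∫ x, (f₁ x - f₂ x) * (g₁ x - g₂ x) ∂ν := by
  have hf : MemLp (fun x ↦ α * (f₁ x - f₂ x)) 2 ν := (hf₁.sub hf₂).const_mul α
  have hg : MemLp (fun x ↦ β * (g₁ x - g₂ x)) 2 ν := (hg₁.sub hg₂).const_mul β
  have cross : ∫ x, β * (g₁ x - g₂ x) * (α * (f₁ x - f₂ x)) ∂ν =
      α * β * ∫ x, (f₁ x - f₂ x) * (g₁ x - g₂ x) ∂ν := by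
    rw [← integral_const_mul]
    congr with x
    ring
  calc
    _ = ∫ x, (β * (g₁ x - g₂ x) + α * (f₁ x - f₂ x)) ^ 2 ∂ν := by
      congr with x
      ring
    _ = ∫ x, (β * (g₁ x - g₂ x)) ^ 2 ∂ν + ∫ x, (α * (f₁ x - f₂ x)) ^ 2 ∂ν +
        2 * (α * β * ∫ x, (f₁ x - f₂ x) * (g₁ x - g₂ x) ∂ν) := by
      rw [integral_add_sq_of_memLp_two hg hf, cross]
    _ = _ := by
      simp only [add_sub_add_left_eq_sub, add_sub_add_right_eq_sub, mul_sub, mul_assoc]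

end SquareIntegrable

section Gaussian

variable {v w : ℝ}

theorem gaussPdf_coe_eq_gaussianPDFReal (m : ℝ) (u : NNReal) :
    gaussPdf m u = ProbabilityTheory.gaussianPDFReal m u :=
  rfl

theorem integrable_gaussPdf (m : ℝ) (hv : 0 ≤ v) : Integrable (gaussPdf m v) := by
  lift v to NNReal using hv
  exact ProbabilityTheory.integrable_gaussianPDFReal m v

theorem integral_gaussPdf_eq_one (m : ℝ) (hv : 0 < v) : ∫ x, gaussPdf m v x = 1 := by
  lift v to NNReal using hv.le
  rw [gaussPdf_coe_eq_gaussianPDFReal]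
  exact ProbabilityTheory.integral_gaussianPDFReal_eq_one m (NNReal.coe_pos.mp hv).ne'

theorem gaussPdf_mul_gaussPdf (a b x : ℝ) (hv : 0 < v) (hw : 0 < w) :
    gaussPdf a v x * gaussPdf b w x =
      gaussPdf b (v + w) a * gaussPdf ((w * a + v * b) / (v + w)) (v * w / (v + w)) x := by
  have variances :
      2 * π * v * (2 * π * w) = 2 * π * (v + w) * (2 * π * (v * w / (v + w))) := by
    field_simp
  have exponents : -(x - a) ^ 2 / (2 * v) + -(x - b) ^ 2 / (2 * w) =
      -(a - b) ^ 2 / (2 * (v + w)) +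
        -(x - (w * a + v * b) / (v + w)) ^ 2 / (2 * (v * w / (v + w))) := by
    field_simp
    ring
  simp only [gaussPdf]
  rw [mul_mul_mul_comm, mul_mul_mul_comm (√(2 * π * (v + w)))⁻¹, ← exp_add, ← exp_add,
    ← mul_inv, ← mul_inv, ← sqrt_mul (by positivity), ← sqrt_mul (by positivity),
    variances, exponents]

theorem memLp_two_gaussPdf (m : ℝ) (hv : 0 < v) : MemLp (gaussPdf m v) 2 := by
  refine (memLp_two_iff_integrable_sq (integrable_gaussPdf m hv.le).aestronglyMeasurable).mpr ?_
  simp_rw [sq, gaussPdf_mul_gaussPdf m m _ hv hv]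
  exact (integrable_gaussPdf _ (by positivity)).const_mul _

theorem integral_gaussPdf_mul_gaussPdf (a b : ℝ) (hv : 0 < v) (hw : 0 < w) :
    ∫ x, gaussPdf a v x * gaussPdf b w x = gaussPdf b (v + w) a := by
  simp_rw [gaussPdf_mul_gaussPdf a b _ hv hw]
  rw [integral_const_mul, integral_gaussPdf_eq_one _ (by positivity), mul_one]

end Gaussian

theorem mixture_L2_dist_rho1_rho4_general (α β : ℝ) {vG1 vG2 vP1 vP2 : ℝ}
    (μG1 μG2 μP1 μP2 : ℝ) (hG1 : 0 < vG1) (hG2 : 0 < vG2) (hP1 : 0 < vP1) (hP2 : 0 < vP2) :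
    ∫ lam : ℝ,
        ((α * gaussPdf μG1 vG1 lam + β * gaussPdf μP1 vP1 lam) -
          (α * gaussPdf μG2 vG2 lam + β * gaussPdf μP2 vP2 lam)) ^ 2 =
      (∫ lam : ℝ,
        ((α * gaussPdf μG1 vG1 lam + β * gaussPdf μP1 vP1 lam) -
          (α * gaussPdf μG1 vG1 lam + β * gaussPdf μP2 vP2 lam)) ^ 2) +
      (∫ lam : ℝ,
        ((α * gaussPdf μG1 vG1 lam + β * gaussPdf μP1 vP1 lam) -
          (α * gaussPdf μG2 vG2 lam + β * gaussPdf μP1 vP1 lam)) ^ 2) +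
      2 * α * β *
        (gaussPdf μP1 (vG1 + vP1) μG1 - gaussPdf μP2 (vG1 + vP2) μG1 +
          gaussPdf μP2 (vG2 + vP2) μG2 - gaussPdf μP1 (vG2 + vP1) μG2) := by
  have memG1 := memLp_two_gaussPdf μG1 hG1
  have memG2 := memLp_two_gaussPdf μG2 hG2
  have memP1 := memLp_two_gaussPdf μP1 hP1
  have memP2 := memLp_two_gaussPdf μP2 hP2
  rw [integral_sq_linearCombination_sub α β memG1 memG2 memP1 memP2,
    integral_sub_mul_sub (memG1.integrable_mul memP1) (memG1.integrable_mul memP2)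
      (memG2.integrable_mul memP1) (memG2.integrable_mul memP2),
    integral_gaussPdf_mul_gaussPdf μG1 μP1 hG1 hP1, integral_gaussPdf_mul_gaussPdf μG1 μP2 hG1 hP2,
    integral_gaussPdf_mul_gaussPdf μG2 μP2 hG2 hP2, integral_gaussPdf_mul_gaussPdf μG2 μP1 hG2 hP1]

/-- Equation 11 of the paper: with the four mixtures
`ρ₁ = α·N(·; μG1, v) + (1-α)·N(·; μP1, v)`, `ρ₂ = α·N(·; μG1, v) + (1-α)·N(·; μP2, v)`,
`ρ₃ = α·N(·; μG2, v) + (1-α)·N(·; μP1, v)`, `ρ₄ = α·N(·; μG2, v) + (1-α)·N(·; μP2, v)`,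
the squared distance to the invalid-depth ray decomposes as
`∫(ρ₁-ρ₄)² = ∫(ρ₁-ρ₂)² + ∫(ρ₁-ρ₃)²
  + 2α(1-α)(N(μG1;μP1,2v) - N(μG1;μP2,2v) + N(μG2;μP2,2v) - N(μG2;μP1,2v))`. -/
theorem mixture_L2_dist_rho1_rho4 (α v μG1 μG2 μP1 μP2 : ℝ) (hv : 0 < v) :
    ∫ lam : ℝ,
        ((α * gaussPdf μG1 v lam + (1 - α) * gaussPdf μP1 v lam) -
          (α * gaussPdf μG2 v lam + (1 - α) * gaussPdf μP2 v lam)) ^ 2 =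
      (∫ lam : ℝ,
        ((α * gaussPdf μG1 v lam + (1 - α) * gaussPdf μP1 v lam) -
          (α * gaussPdf μG1 v lam + (1 - α) * gaussPdf μP2 v lam)) ^ 2) +
      (∫ lam : ℝ,
        ((α * gaussPdf μG1 v lam + (1 - α) * gaussPdf μP1 v lam) -
          (α * gaussPdf μG2 v lam + (1 - α) * gaussPdf μP1 v lam)) ^ 2) +
      2 * α * (1 - α) *
        (gaussPdf μP1 (2 * v) μG1 - gaussPdf μP2 (2 * v) μG1 +
          gaussPdf μP2 (2 * v) μG2 - gaussPdf μP1 (2 * v) μG2) := by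
  rw [two_mul v]
  exact mixture_L2_dist_rho1_rho4_general α (1 - α) μG1 μG2 μP1 μP2 hv hv hv hv
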